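/- arXiv:1902.07937 — 2 statements merged into one kernel-verified Lean document; each statement's English description precedes it below -/
import Mathlib

section
/- Every k-typed Schelling game whose topology is a star graph or a graph of maximum degree 2 admits at least one equilibrium assignment. -/
/-- A (social) Schelling game: agents `A`, of which `strategic` are the strategic
ones (the rest being stubborn), a social network `net` on the agents (the friends
of an agent are her neighbors in `net`, all other agents are her enemies), a
topology `top` on the set of locations `V`, and the preferred locations `loc`
of the (stubborn) agents. -/
structure SchellingGame (A V : Type) where
  strategic : Finset A
  net : SimpleGraph A
  top : SimpleGraph V
  loc : A → V

namespace SchellingGame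

variable {A V : Type} [Fintype A] [DecidableEq A] [Fintype V] [DecidableEq V]

/-- There are `n ≥ 2` agents, strictly more locations than agents, and the
stubborn agents have pairwise distinct preferred locations. -/
def WellFormed (g : SchellingGame A V) : Prop :=
  2 ≤ Fintype.card A ∧ Fintype.card A < Fintype.card V ∧
    Set.InjOn g.loc ↑(g.strategicᶜ)

/-- An assignment is an injective placement of the agents on the nodes of the
topology which places every stubborn agent at her preferred location. -/
def IsAssignment (g : SchellingGame A V) (v : A → V) : Prop :=
  Function.Injective v ∧ ∀ i ∉ g.strategic, v i = g.loc i

/-- The number of friends of `i` occupying nodes adjacent to `v i`. -/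
noncomputable def fcount (g : SchellingGame A V) (v : A → V) (i : A) : ℕ :=
  Nat.card {j : A // g.net.Adj i j ∧ g.top.Adj (v i) (v j)}

/-- The number of enemies of `i` occupying nodes adjacent to `v i`. -/
noncomputable def ecount (g : SchellingGame A V) (v : A → V) (i : A) : ℕ :=
  Nat.card {j : A // j ≠ i ∧ ¬ g.net.Adj i j ∧ g.top.Adj (v i) (v j)}

/-- The utility of agent `i` under assignment `v`: `0` if `i` has no adjacent
friends, and otherwise the fraction of friends among her occupied neighbors. -/
noncomputable def util (g : SchellingGame A V) (v : A → V) (i : A) : ℚ :=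
  if g.fcount v i = 0 then 0
  else (g.fcount v i : ℚ) / ((g.fcount v i : ℚ) + (g.ecount v i : ℚ))

/-- An assignment is an equilibrium if no strategic agent can strictly increase
her utility by relocating to an unoccupied node. -/
def IsEquilibrium (g : SchellingGame A V) (v : A → V) : Prop :=
  g.IsAssignment v ∧ ∀ i ∈ g.strategic, ∀ z : V, (∀ j : A, v j ≠ z) →
    g.util (Function.update v i z) i ≤ g.util v i

/-- The social welfare: the total utility of the strategic agents. -/
noncomputable def SW (g : SchellingGame A V) (v : A → V) : ℚ :=
  ∑ i ∈ g.strategic, g.util v i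

/-- `g` is a `k`-typed Schelling game with type map `typ`: two distinct agents are
friends iff they have the same type, and every type is nonempty. -/
def IsTypedGame (g : SchellingGame A V) (k : ℕ) (typ : A → Fin k) : Prop :=
  (∀ i j : A, g.net.Adj i j ↔ (i ≠ j ∧ typ i = typ j)) ∧ ∀ c : Fin k, ∃ i : A, typ i = c

end SchellingGame

/-- A star graph: one center node adjacent to all other nodes, and no other edges. -/
def IsStar {V : Type} (G : SimpleGraph V) : Prop :=
  ∃ c : V, ∀ a b : V, G.Adj a b ↔ (a ≠ b ∧ (a = c ∨ b = c))

/-!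
On a star, an assignment occupying the center is an equilibrium: a leaf sees only the center
wherever she moves, and the agent at the center can only move to a leaf next to the empty center.
If no assignment occupies the center, all utilities are `0`.

If all degrees are at most `2`, the only utilities are `0`, `1/2` and `1`. For an agent with `f`
friends and `e` enemies nearby these correspond to `2 * f - e ≤ 0`, `2 * f - e = 1` and
`2 * f - e ≥ 2`. So an improving move raises `2 * f - e`, hence also the sum over all adjacent
pairs of agents of `2` for friends and `-1` for enemies. An assignment maximizing this sum is an
equilibrium.
-/

theorem sum_sum_eq_two_nsmul_add_sum_erase {ι M : Type*} [Fintype ι] [DecidableEq ι]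
    [AddCommMonoid M] {w : ι → ι → M} (hsymm : ∀ a b, w a b = w b a) {i : ι} (hi : w i i = 0) :
    ∑ a, ∑ b, w a b =
      2 • ∑ b, w i b + ∑ a ∈ Finset.univ.erase i, ∑ b ∈ Finset.univ.erase i, w a b := by
  have hrow (a : ι) : ∑ b, w a b = w i a + ∑ b ∈ Finset.univ.erase i, w a b := by
    rw [← Finset.add_sum_erase _ _ (Finset.mem_univ i), hsymm a i]
  have hcross : ∑ a ∈ Finset.univ.erase i, w i a = ∑ b, w i b := by
    rw [hrow i, hi, zero_add]
  calc ∑ a, ∑ b, w a b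
      = ∑ b, w i b + ∑ a ∈ Finset.univ.erase i, ∑ b, w a b :=
        (Finset.add_sum_erase _ _ (Finset.mem_univ i)).symm
    _ = ∑ b, w i b + (∑ b, w i b +
          ∑ a ∈ Finset.univ.erase i, ∑ b ∈ Finset.univ.erase i, w a b) := by
        rw [Finset.sum_congr rfl fun a _ ↦ hrow a, Finset.sum_add_distrib, hcross]
    _ = 2 • ∑ b, w i b + ∑ a ∈ Finset.univ.erase i, ∑ b ∈ Finset.univ.erase i, w a b := by
        rw [two_nsmul, add_assoc]

theorem two_mul_sub_lt_of_div_lt_div {f e f' e' : ℕ} (h : f + e ≤ 2) (h' : f' + e' ≤ 2)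
    (hlt : (f : ℚ) / (f + e) < f' / (f' + e')) :
    2 * (f : ℤ) - e < 2 * f' - e' := by
  have hf' : 0 < f' := by
    rw [Nat.pos_iff_ne_zero]
    rintro rfl
    have : (0 : ℚ) ≤ f / (f + e) := by positivity
    simp only [Nat.cast_zero, zero_div] at hlt
    linarith
  obtain rfl | hf := Nat.eq_zero_or_pos f
  · lia
  · have hcross : f * (f' + e') < f' * (f + e) := by
      rw [div_lt_div_iff₀ (by positivity) (by positivity)] at hlt
      exact_mod_cast hlt
    have he : 0 < e := by
      rw [Nat.pos_iff_ne_zero]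
      rintro rfl
      nlinarith
    obtain ⟨rfl, rfl⟩ : f = 1 ∧ e = 1 := by lia
    lia

theorem IsStar.exists_eq_starGraph {V : Type} {G : SimpleGraph V} (hG : IsStar G) :
    ∃ c, G = SimpleGraph.starGraph c := by
  obtain ⟨c, hc⟩ := hG
  refine ⟨c, ?_⟩
  ext a b
  rw [hc, SimpleGraph.starGraph_adj]

namespace SchellingGame

variable {A V : Type} {g : SchellingGame A V} {v w : A → V} {i : A} {z : V}

theorem exists_isAssignment [Fintype A] [DecidableEq A] (hcard : Nonempty (A ↪ V))
    (hloc : Set.InjOn g.loc ↑(g.strategicᶜ)) : ∃ v, g.IsAssignment v := by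
  classical
  obtain ⟨emb⟩ := hcard
  have hcard_union : Fintype.card A ≤
      (g.strategicᶜ.image g.loc ∪ Finset.univ.map emb).card := by
    rw [← Finset.card_univ, ← Finset.card_map emb]
    exact Finset.card_le_card Finset.subset_union_right
  obtain ⟨t, hloc_t, -, ht⟩ := Finset.exists_subsuperset_card_eq Finset.subset_union_left
    (Finset.card_image_le.trans (Finset.card_le_univ _)) hcard_union
  obtain ⟨e, he⟩ := Finset.exists_equiv_extend_of_card_eq ht.symm hloc_t hloc
  exact ⟨fun a ↦ e a, Subtype.val_injective.comp e.injective,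
    fun i hi ↦ he i (Finset.mem_compl.2 hi)⟩

theorem IsAssignment.update [DecidableEq A] (hv : g.IsAssignment v) (hi : i ∈ g.strategic)
    (hz : ∀ j, v j ≠ z) : g.IsAssignment (Function.update v i z) := by
  refine ⟨fun a b hab ↦ ?_, fun j hj ↦ ?_⟩
  · have := @hv.1 a b
    grind [Function.update_apply]
  · rw [Function.update_of_ne (ne_of_mem_of_not_mem hi hj).symm, hv.2 j hj]

theorem util_eq_div (g : SchellingGame A V) (v : A → V) (i : A) :
    g.util v i = g.fcount v i / (g.fcount v i + g.ecount v i) := by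
  unfold util
  split_ifs with h <;> simp [h]

theorem util_nonneg (g : SchellingGame A V) (v : A → V) (i : A) : 0 ≤ g.util v i := by
  rw [util_eq_div]
  positivity

theorem util_eq_zero (h : ∀ j, ¬ g.top.Adj (v i) (v j)) : g.util v i = 0 :=
  if_pos <| Nat.card_eq_zero.2 <| .inl ⟨fun ⟨j, hj⟩ ↦ h j hj.2⟩

theorem util_congr (h : ∀ j ≠ i, (g.top.Adj (v i) (v j) ↔ g.top.Adj (w i) (w j))) :
    g.util v i = g.util w i := by
  have hf : g.fcount v i = g.fcount w i :=
    Nat.card_congr <| Equiv.subtypeEquivRight fun j ↦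
      and_congr_right fun hj ↦ h j hj.ne'
  have he : g.ecount v i = g.ecount w i :=
    Nat.card_congr <| Equiv.subtypeEquivRight fun j ↦
      and_congr_right fun hj ↦ and_congr_right fun _ ↦ h j hj
  rw [util, util, hf, he]

theorem fcount_add_ecount [Finite A] (g : SchellingGame A V) (v : A → V) (i : A) :
    g.fcount v i + g.ecount v i = (v ⁻¹' g.top.neighborSet (v i)).ncard := by
  have hdisj : Disjoint {j | g.net.Adj i j ∧ g.top.Adj (v i) (v j)}
      {j | j ≠ i ∧ ¬ g.net.Adj i j ∧ g.top.Adj (v i) (v j)} :=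
    Set.disjoint_left.2 fun j hf he ↦ he.2.1 hf.1
  have hunion : v ⁻¹' g.top.neighborSet (v i) = {j | g.net.Adj i j ∧ g.top.Adj (v i) (v j)} ∪
      {j | j ≠ i ∧ ¬ g.net.Adj i j ∧ g.top.Adj (v i) (v j)} := by
    ext j
    have hne : g.top.Adj (v i) (v j) → j ≠ i := fun h hj ↦ h.ne (hj ▸ rfl)
    simp only [Set.mem_preimage, SimpleGraph.mem_neighborSet, Set.mem_union, Set.mem_ofPred_eq]
    tauto
  rw [hunion, Set.ncard_union_eq hdisj]
  rfl

theorem fcount_add_ecount_le [Finite A] (hv : Function.Injective v) {d : ℕ}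
    (hd : (g.top.neighborSet (v i)).encard ≤ d) : g.fcount v i + g.ecount v i ≤ d := by
  rw [fcount_add_ecount, ← Nat.cast_le (α := ℕ∞), (Set.toFinite _).cast_ncard_eq,
    ← hv.injOn.encard_image]
  exact (Set.encard_le_encard (Set.image_preimage_subset _ _)).trans hd

section Star

variable {c : V}

theorem util_eq_zero_of_top_eq_starGraph (htop : g.top = SimpleGraph.starGraph c)
    (hc : ∀ j, v j ≠ c) : g.util v i = 0 :=
  util_eq_zero fun j hj ↦ by
    rw [htop, SimpleGraph.starGraph_adj] at hj
    exact hj.2.elim (hc i) (hc j)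

theorem IsAssignment.isEquilibrium_of_apply_eq_center [DecidableEq A]
    (htop : g.top = SimpleGraph.starGraph c) (hv : g.IsAssignment v) {o : A} (ho : v o = c) :
    g.IsEquilibrium v := by
  refine ⟨hv, fun i hi z hz ↦ ?_⟩
  obtain rfl | hio := eq_or_ne i o
  · have hempty (j : A) : Function.update v i z j ≠ c := by
      obtain rfl | hji := eq_or_ne j i
      · rw [Function.update_self, ← ho]
        exact (hz j).symm
      · rw [Function.update_of_ne hji, ← ho]
        exact hv.1.ne hji
    rw [util_eq_zero_of_top_eq_starGraph htop hempty]
    exact util_nonneg g v i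
  · refine (util_congr fun j hj ↦ ?_).le
    have hic : v i ≠ c := ho ▸ hv.1.ne hio
    have hzc : z ≠ c := ho ▸ (hz o).symm
    have hij : v i ≠ v j := hv.1.ne hj.symm
    simp only [htop, SimpleGraph.starGraph_adj, Function.update_self, Function.update_of_ne hj,
      ne_eq, hic, hzc, hij, (hz j).symm, not_false_eq_true]

theorem exists_isEquilibrium_of_top_eq_starGraph [DecidableEq A]
    (htop : g.top = SimpleGraph.starGraph c) (hex : ∃ v, g.IsAssignment v) :
    ∃ v, g.IsEquilibrium v := by
  by_cases hocc : ∃ v, g.IsAssignment v ∧ ∃ o, v o = c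
  · obtain ⟨v, hv, o, ho⟩ := hocc
    exact ⟨v, hv.isEquilibrium_of_apply_eq_center htop ho⟩
  · push Not at hocc
    obtain ⟨v, hv⟩ := hex
    refine ⟨v, hv, fun i hi z hz ↦ ?_⟩
    rw [util_eq_zero_of_top_eq_starGraph htop (hocc _ (hv.update hi hz))]
    exact util_nonneg g v i

end Star

section Potential

theorem exists_isEquilibrium_of_potential [DecidableEq A] {Φ : (A → V) → ℤ} {B : ℤ}
    (hB : ∀ v, Φ v ≤ B)
    (hΦ : ∀ v, g.IsAssignment v → ∀ i ∈ g.strategic, ∀ z, (∀ j, v j ≠ z) →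
      g.util v i < g.util (Function.update v i z) i → Φ v < Φ (Function.update v i z))
    (hex : ∃ v, g.IsAssignment v) : ∃ v, g.IsEquilibrium v := by
  obtain ⟨v₀, hv₀⟩ := hex
  obtain ⟨_, ⟨v, hv, rfl⟩, hmax⟩ :=
    Int.exists_greatest_of_bdd (P := (· ∈ Φ '' {v | g.IsAssignment v}))
      ⟨B, Set.forall_mem_image.2 fun v _ ↦ hB v⟩ ⟨_, Set.mem_image_of_mem Φ hv₀⟩
  refine ⟨v, hv, fun i hi z hz ↦ ?_⟩
  by_contra! hlt
  exact (hΦ v hv i hi z hz hlt).not_ge (hmax _ (Set.mem_image_of_mem Φ (hv.update hi hz)))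

open Classical in
/-- The contribution of the ordered pair `(i, j)` of agents to `SchellingGame.potential`. -/
noncomputable def pairWeight (g : SchellingGame A V) (v : A → V) (i j : A) : ℤ :=
  if g.top.Adj (v i) (v j) then (if g.net.Adj i j then 2 else -1) else 0

theorem pairWeight_comm (g : SchellingGame A V) (v : A → V) (i j : A) :
    g.pairWeight v i j = g.pairWeight v j i := by
  rw [pairWeight, pairWeight, g.top.adj_comm, g.net.adj_comm]

theorem pairWeight_self (g : SchellingGame A V) (v : A → V) (i : A) : g.pairWeight v i i = 0 :=
  if_neg (SimpleGraph.irrefl _)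

theorem pairWeight_le_two (g : SchellingGame A V) (v : A → V) (i j : A) :
    g.pairWeight v i j ≤ 2 := by
  unfold pairWeight
  split_ifs <;> norm_num

theorem pairWeight_update_of_ne [DecidableEq A] (g : SchellingGame A V) (v : A → V) (z : V)
    {a b : A} (ha : a ≠ i) (hb : b ≠ i) :
    g.pairWeight (Function.update v i z) a b = g.pairWeight v a b := by
  rw [pairWeight, pairWeight, Function.update_of_ne ha, Function.update_of_ne hb]

variable [Fintype A]

theorem sum_pairWeight (g : SchellingGame A V) (v : A → V) (i : A) :
    ∑ j, g.pairWeight v i j = 2 * g.fcount v i - g.ecount v i := by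
  classical
  have hsplit (j : A) : g.pairWeight v i j =
      2 * (if g.net.Adj i j ∧ g.top.Adj (v i) (v j) then 1 else 0) -
        (if j ≠ i ∧ ¬ g.net.Adj i j ∧ g.top.Adj (v i) (v j) then 1 else 0) := by
    obtain rfl | hji := eq_or_ne j i
    · simp [pairWeight_self]
    · by_cases htop : g.top.Adj (v i) (v j) <;> by_cases hnet : g.net.Adj i j <;>
        simp [pairWeight, htop, hnet, hji]
  simp only [hsplit, Finset.sum_sub_distrib, ← Finset.mul_sum, Finset.sum_boole, fcount, ecount,
    Nat.card_eq_fintype_card, Fintype.card_subtype]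

/-- The potential of a Schelling game with topology of maximum degree two: each unordered pair of
agents on adjacent nodes counts `4` if they are friends and `-2` if they are enemies. The sum runs
over ordered pairs, whence the factor `2` in `SchellingGame.potential_update_sub`. -/
noncomputable def potential (g : SchellingGame A V) (v : A → V) : ℤ :=
  ∑ i, ∑ j, g.pairWeight v i j

theorem potential_le (g : SchellingGame A V) (v : A → V) :
    g.potential v ≤ Fintype.card A * (Fintype.card A * 2) :=
  calc g.potential v ≤ ∑ _i : A, ∑ _j : A, 2 :=
        Finset.sum_le_sum fun _ _ ↦ Finset.sum_le_sum fun _ _ ↦ pairWeight_le_two ..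
    _ = Fintype.card A * (Fintype.card A * 2) := by simp

variable [DecidableEq A]

theorem potential_update_sub (g : SchellingGame A V) (v : A → V) (i : A) (z : V) :
    g.potential (Function.update v i z) - g.potential v =
      2 * ((2 * g.fcount (Function.update v i z) i - g.ecount (Function.update v i z) i) -
        (2 * g.fcount v i - g.ecount v i)) := by
  have hrest : ∑ a ∈ Finset.univ.erase i, ∑ b ∈ Finset.univ.erase i,
        g.pairWeight (Function.update v i z) a b =
      ∑ a ∈ Finset.univ.erase i, ∑ b ∈ Finset.univ.erase i, g.pairWeight v a b :=
    Finset.sum_congr rfl fun a ha ↦ Finset.sum_congr rfl fun b hb ↦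
      pairWeight_update_of_ne g v z (Finset.ne_of_mem_erase ha) (Finset.ne_of_mem_erase hb)
  have hsplit (w : A → V) : g.potential w = 2 • ∑ b, g.pairWeight w i b +
      ∑ a ∈ Finset.univ.erase i, ∑ b ∈ Finset.univ.erase i, g.pairWeight w a b :=
    sum_sum_eq_two_nsmul_add_sum_erase (g.pairWeight_comm w) (g.pairWeight_self w i)
  rw [hsplit, hsplit v, hrest, sum_pairWeight, sum_pairWeight]
  ring

theorem potential_lt_potential_update (hv : g.fcount v i + g.ecount v i ≤ 2)
    (hv' : g.fcount (Function.update v i z) i + g.ecount (Function.update v i z) i ≤ 2)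
    (hlt : g.util v i < g.util (Function.update v i z) i) :
    g.potential v < g.potential (Function.update v i z) := by
  rw [util_eq_div, util_eq_div] at hlt
  linarith [potential_update_sub g v i z, two_mul_sub_lt_of_div_lt_div hv hv' hlt]

end Potential

theorem exists_isEquilibrium_of_encard_neighborSet_le_two [Finite A] [DecidableEq A]
    (hdeg : ∀ a, (g.top.neighborSet a).encard ≤ 2) (hex : ∃ v, g.IsAssignment v) :
    ∃ v, g.IsEquilibrium v := by
  have := Fintype.ofFinite A
  refine exists_isEquilibrium_of_potential g.potential_le (fun v hv i hi z hz ↦ ?_) hex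
  exact potential_lt_potential_update (fcount_add_ecount_le hv.1 (hdeg _))
    (fcount_add_ecount_le (hv.update hi hz).1 (hdeg _))

end SchellingGame

theorem stmt3_general {A V : Type} [Fintype A] [DecidableEq A] (g : SchellingGame A V)
    (hcard : Nonempty (A ↪ V)) (hloc : Set.InjOn g.loc ↑(g.strategicᶜ))
    (htop : IsStar g.top ∨ ∀ a, (g.top.neighborSet a).encard ≤ 2) :
    ∃ v : A → V, g.IsEquilibrium v := by
  have hex := SchellingGame.exists_isAssignment hcard hloc
  obtain hstar | hdeg := htop
  · obtain ⟨c, hc⟩ := hstar.exists_eq_starGraph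
    exact SchellingGame.exists_isEquilibrium_of_top_eq_starGraph hc hex
  · exact SchellingGame.exists_isEquilibrium_of_encard_neighborSet_le_two hdeg hex

/-- Every k-typed Schelling game whose topology is a star graph or a
graph of maximum degree 2 admits at least one equilibrium assignment. -/
theorem stmt3 (A V : Type) [Fintype A] [DecidableEq A] [Fintype V] [DecidableEq V]
    (g : SchellingGame A V) (hwf : g.WellFormed)
    (k : ℕ) (hk : 2 ≤ k) (typ : A → Fin k) (ht : g.IsTypedGame k typ)
    (htop : IsStar g.top ∨ ∀ a : V, Nat.card {b : V // g.top.Adj a b} ≤ 2) :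
    ∃ v : A → V, g.IsEquilibrium v := by
  exact stmt3_general g (Function.Embedding.nonempty_of_card_le hwf.2.1.le) hwf.2.2 <|
    htop.imp_right fun hdeg a ↦ (Set.encard_le_coe_iff_finite_ncard_le).2 ⟨Set.toFinite _, hdeg a⟩
end

section
/- In every k-typed Schelling game with no stubborn agents whose topology is a connected graph with strictly more nodes than agents and in which every type contains at least two agents, every equilibrium assignment has social welfare at least 1; consequently, the price of anarchy of any such game is at most n, where n is the number of agents. -/
/-! By connectivity some unoccupied node `z` is adjacent to an occupied one; let `D` be the set of
agents around `z`. An equilibrium gives every strategic agent at least the fraction of `D` formed by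
her friends, since she could move to `z`. When every agent has a strategic friend, each member of
`D` is counted in some numerator, so these fractions sum to at least `1`. No agent has utility above
`1`, which bounds the price of anarchy. -/

theorem exists_adj_of_preconnected {V : Type*} {G : SimpleGraph V} (hG : G.Preconnected)
    {s : Set V} (hs : s.Nonempty) (hs' : s ≠ Set.univ) : ∃ y ∉ s, ∃ x ∈ s, G.Adj y x := by
  obtain ⟨x, hx⟩ := hs
  obtain ⟨y, hy⟩ := (Set.ne_univ_iff_exists_notMem s).mp hs'
  obtain ⟨p⟩ := hG x y
  obtain ⟨d, -, hfst, hsnd⟩ := p.exists_boundary_dart s hx hy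
  exact ⟨d.snd, hsnd, d.fst, hfst, d.adj.symm⟩

open Finset in
theorem card_le_sum_card_filter {ι α : Type*} (r : ι → α → Prop) [∀ i, DecidablePred (r i)]
    {s : Finset ι} {t : Finset α} (h : ∀ a ∈ t, ∃ i ∈ s, r i a) :
    #t ≤ ∑ i ∈ s, #{a ∈ t | r i a} := by
  classical
  have hcover : t ⊆ s.biUnion fun i => {a ∈ t | r i a} := fun a ha => by
    obtain ⟨i, hi, hia⟩ := h a ha
    exact mem_biUnion.mpr ⟨i, hi, mem_filter.mpr ⟨ha, hia⟩⟩
  exact (card_le_card hcover).trans card_biUnion_le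

namespace SchellingGame

open Finset

variable {A V : Type} {g : SchellingGame A V}

theorem IsTypedGame.exists_net_adj {k : ℕ} {typ : A → Fin k} (ht : g.IsTypedGame k typ) (j : A)
    (htwo : 2 ≤ Nat.card {i // typ i = typ j}) : ∃ i, g.net.Adj i j := by
  have : Finite {i // typ i = typ j} := Nat.finite_of_card_ne_zero (by lia)
  have : Nontrivial {i // typ i = typ j} := Finite.one_lt_card_iff_nontrivial.mp htwo
  obtain ⟨⟨i, hi⟩, hne⟩ := exists_ne (⟨j, rfl⟩ : {i // typ i = typ j})
  exact ⟨i, (ht.1 i j).mpr ⟨fun hij => hne (Subtype.ext hij), hi⟩⟩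

variable (g)

theorem util_le_one (v : A → V) (i : A) : g.util v i ≤ 1 := by
  unfold util
  split_ifs
  · exact zero_le_one
  · exact div_le_one_of_le₀ (le_add_of_nonneg_right (Nat.cast_nonneg _)) (by positivity)

theorem SW_le_card_strategic (v : A → V) : g.SW v ≤ #g.strategic := by
  simpa only [SW, nsmul_eq_mul, mul_one] using
    sum_le_card_nsmul g.strategic (g.util v) 1 fun i _ => g.util_le_one v i

variable [Fintype A]

open Classical in
/-- The agents which the assignment `v` places on nodes adjacent to `z`. The node `z` may be
unoccupied: these are the agents, friend or enemy, that an agent relocating to `z` would meet. -/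
noncomputable def agentsAround (v : A → V) (z : V) : Finset A :=
  {j | g.top.Adj z (v j)}

theorem mem_agentsAround {v : A → V} {z : V} {j : A} :
    j ∈ g.agentsAround v z ↔ g.top.Adj z (v j) := by
  simp [agentsAround]

variable {g} in
theorem exists_notMem_range_agentsAround_nonempty [Nonempty A] (hG : g.top.Preconnected)
    {v : A → V} (hv : ¬ Function.Surjective v) :
    ∃ z ∉ Set.range v, (g.agentsAround v z).Nonempty := by
  obtain ⟨z, hz, -, ⟨j, rfl⟩, hzj⟩ :=
    exists_adj_of_preconnected hG (Set.range_nonempty v) (mt Set.range_eq_univ.mp hv)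
  exact ⟨z, hz, j, g.mem_agentsAround.mpr hzj⟩

variable [DecidableEq A]

open Classical in
theorem fcount_update (v : A → V) (i : A) (z : V) :
    g.fcount (Function.update v i z) i = #{j ∈ g.agentsAround v z | g.net.Adj i j} := by
  rw [fcount, Nat.card_eq_fintype_card, Fintype.card_subtype]
  congr 1
  ext j
  rw [mem_filter_univ, mem_filter, mem_agentsAround, Function.update_self, and_comm]
  exact and_congr_left fun hij => by rw [Function.update_of_ne hij.ne']

open Classical in
theorem ecount_update (v : A → V) (i : A) (z : V) :
    g.ecount (Function.update v i z) i =
      #{j ∈ g.agentsAround v z | j ≠ i ∧ ¬ g.net.Adj i j} := by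
  rw [ecount, Nat.card_eq_fintype_card, Fintype.card_subtype]
  congr 1
  ext j
  rw [mem_filter_univ, mem_filter, mem_agentsAround, Function.update_self, ← and_assoc, and_comm]
  exact and_congr_left fun hj => by rw [Function.update_of_ne hj.1]

theorem fcount_update_add_ecount_update_le (v : A → V) (i : A) (z : V) :
    g.fcount (Function.update v i z) i + g.ecount (Function.update v i z) i ≤
      #(g.agentsAround v z) := by
  classical
  rw [fcount_update, ecount_update,
    ← card_filter_add_card_filter_not (s := g.agentsAround v z) (g.net.Adj i)]
  gcongr with j
  exact And.right

-- Only an inequality: agent `i` may herself be one of the agents around `z`, and then she is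
-- counted in the denominator here but is neither a friend nor an enemy of herself.
open Classical in
theorem card_friends_div_card_agentsAround_le_util_update (v : A → V) (i : A) (z : V) :
    (#{j ∈ g.agentsAround v z | g.net.Adj i j} : ℚ) / #(g.agentsAround v z) ≤
      g.util (Function.update v i z) i := by
  rw [← fcount_update, util]
  split_ifs with h
  · simp [h]
  · gcongr
    exact_mod_cast g.fcount_update_add_ecount_update_le v i z

variable {g}

theorem IsEquilibrium.one_le_SW_of_agentsAround_nonempty {v : A → V} (hv : g.IsEquilibrium v)
    {z : V} (hz : z ∉ Set.range v) (hne : (g.agentsAround v z).Nonempty)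
    (hfriend : ∀ j, ∃ i ∈ g.strategic, g.net.Adj i j) : 1 ≤ g.SW v := by
  classical
  set D := g.agentsAround v z
  have hD : (0 : ℚ) < #D := by exact_mod_cast hne.card_pos
  calc (1 : ℚ)
      ≤ (∑ i ∈ g.strategic, (#{j ∈ D | g.net.Adj i j} : ℚ)) / #D := by
        rw [one_le_div hD]
        exact_mod_cast card_le_sum_card_filter g.net.Adj fun j _ => hfriend j
    _ = ∑ i ∈ g.strategic, (#{j ∈ D | g.net.Adj i j} : ℚ) / #D := sum_div ..
    _ ≤ ∑ i ∈ g.strategic, g.util (Function.update v i z) i :=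
        sum_le_sum fun i _ => g.card_friends_div_card_agentsAround_le_util_update v i z
    _ ≤ g.SW v := sum_le_sum fun i hi => hv.2 i hi z fun j hj => hz ⟨j, hj⟩

end SchellingGame

theorem stmt10_general {A V : Type} [Finite A] [Nonempty A] [DecidableEq A]
    {g : SchellingGame A V} (hcard : ENat.card A < ENat.card V) (hG : g.top.Preconnected)
    (hfriend : ∀ j, ∃ i ∈ g.strategic, g.net.Adj i j) :
    (∀ v, g.IsEquilibrium v → 1 ≤ g.SW v) ∧
    (∀ v w, g.IsEquilibrium v → g.SW w ≤ g.strategic.card * g.SW v) := by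
  have : Fintype A := Fintype.ofFinite A
  have one_le_SW (v : A → V) (hv : g.IsEquilibrium v) : 1 ≤ g.SW v := by
    have hsurj : ¬ Function.Surjective v := fun h =>
      hcard.not_ge (ENat.card_le_card_of_injective (Function.injective_surjInv h))
    obtain ⟨z, hz, hne⟩ := SchellingGame.exists_notMem_range_agentsAround_nonempty hG hsurj
    exact hv.one_le_SW_of_agentsAround_nonempty hz hne hfriend
  exact ⟨one_le_SW, fun v w hv => (g.SW_le_card_strategic w).trans
    (le_mul_of_one_le_right (Nat.cast_nonneg _) (one_le_SW v hv))⟩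

/-- in every k-typed Schelling game with no stubborn agents, a connected
topology with strictly more nodes than agents, and at least two agents of each type,
every equilibrium has social welfare at least 1; consequently the price of anarchy of
such a game is at most n. -/
theorem stmt10 (A V : Type) [Fintype A] [DecidableEq A] [Fintype V] [DecidableEq V]
    (g : SchellingGame A V) (hwf : g.WellFormed)
    (k : ℕ) (hk : 2 ≤ k) (typ : A → Fin k) (ht : g.IsTypedGame k typ)
    (hstrat : g.strategic = Finset.univ)
    (htwo : ∀ c : Fin k, 2 ≤ Nat.card {i // typ i = c})
    (hconn : g.top.Connected) :
    (∀ v, g.IsEquilibrium v → 1 ≤ g.SW v) ∧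
    (∀ v w, g.IsEquilibrium v → g.IsAssignment w →
      g.SW w ≤ (Fintype.card A : ℚ) * g.SW v) := by
  have : Nonempty A := Fintype.card_pos_iff.mp (by have := hwf.1; lia)
  obtain ⟨hSW, hPoA⟩ := stmt10_general (g := g) (by simpa using hwf.2.1) hconn.preconnected
    fun j => by simpa [hstrat] using ht.exists_net_adj j (htwo (typ j))
  exact ⟨hSW, fun v w hv _ => by simpa [hstrat] using hPoA v w hv⟩
end
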